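/- Let 1 ≤ q ≤ m be integers and γ ∈ ℝ. Let Z*_1,…,Z*_m be independent standard GP(γ) random variables with descending order statistics Z*_{m:m} ≥ … ≥ Z*_{1:m}. Then the vector of top-q order statistics satisfies the distributional identity ((Z*_{m−i+1:m})_{i=1}^{q}) =_d ((Z*_{m−q+1:m} + (1 + γ Z*_{m−q+1:m}) Z_{q−i:q−1})_{i=1}^{q}), where Z_1,…,Z_{q−1} is another independent standard GP(γ) random sample, independent of Z*_1,…,Z*_m, and Z_{0:q−1} := 0. -/

import Mathlib

open MeasureTheory ProbabilityTheory Filter Real Set Topology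
open scoped ENNReal NNReal Classical

noncomputable section

/-- The `j`-th largest entry of the tuple `x` (`j = 0` gives the maximum, `j = 1` the
second largest, ...); `0` when `j` is out of range. -/
def descStat {m : ℕ} (x : Fin m → ℝ) (j : ℕ) : ℝ :=
  if h : j < m then (x ∘ Tuple.sort x) ⟨m - 1 - j, by omega⟩ else 0

/-- The kernel of degree `m` obtained from `K` by applying it to the top-`q`
(descending) order statistics: `K_m(x_1,…,x_m) = K(x_{m:m},…,x_{m−q+1:m})`. -/
def Km {q : ℕ} (K : (Fin q → ℝ) → ℝ) (m : ℕ) (x : Fin m → ℝ) : ℝ :=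
  K fun j => descStat x (j : ℕ)

/-- `K(a x_1 + b, …, a x_q + b) = K(x_1, …, x_q)` for all `a > 0`, `b ∈ ℝ`. -/
def LocScaleInvariant {q : ℕ} (K : (Fin q → ℝ) → ℝ) : Prop :=
  ∀ a b : ℝ, 0 < a → ∀ x : Fin q → ℝ, K (fun j => a * x j + b) = K x

/-- `h_γ(y) = (y^γ - 1)/γ`, interpreted as `log y` when `γ = 0`. -/
def hGamma (γ : ℝ) (y : ℝ) : ℝ := if γ = 0 then Real.log y else (y ^ γ - 1) / γ

lemma measurable_hGamma (γ : ℝ) : Measurable (hGamma γ) := by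
  unfold hGamma
  split_ifs
  · exact Real.measurable_log
  · fun_prop

/-- The uniform distribution on `(0,1)`. -/
def unif01 : Measure ℝ := volume.restrict (Set.Ioo (0:ℝ) 1)

instance : IsProbabilityMeasure unif01 := ⟨by simp [unif01]⟩

/-- The standard Pareto(1) distribution, with cdf `1 - 1/y` for `y ≥ 1`. -/
def pareto1 : Measure ℝ := ProbabilityTheory.paretoMeasure 1 1

instance : IsProbabilityMeasure pareto1 :=
  ProbabilityTheory.isProbabilityMeasure_paretoMeasure one_pos one_pos

/-- The standard generalized Pareto distribution `GP(γ)`: the law of `h_γ(Y)` for `Y`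
standard Pareto(1). -/
def gpMeasure (γ : ℝ) : Measure ℝ := pareto1.map (hGamma γ)

instance (γ : ℝ) : IsProbabilityMeasure (gpMeasure γ) :=
  Measure.isProbabilityMeasure_map (measurable_hGamma γ).aemeasurable

/-- The unit exponential distribution: the law of `-log U` for `U` uniform on `(0,1)`. -/
def expMeasure1 : Measure ℝ := unif01.map fun u => -Real.log u

instance : IsProbabilityMeasure expMeasure1 :=
  Measure.isProbabilityMeasure_map Real.measurable_log.neg.aemeasurable

/-- The Erlang(q) distribution: the law of the sum of `q` independent unit exponentials. -/
def erlangMeasure (q : ℕ) : Measure ℝ :=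
  (Measure.pi fun _ : Fin q => expMeasure1).map fun e => ∑ i, e i

instance (q : ℕ) : IsProbabilityMeasure (erlangMeasure q) :=
  Measure.isProbabilityMeasure_map
    (Finset.measurable_sum _ fun i _ => measurable_pi_apply i).aemeasurable

/-- The joint law of `r` iid `GP(γ)` random variables. -/
def gpPi (γ : ℝ) (r : ℕ) : Measure (Fin r → ℝ) := Measure.pi fun _ => gpMeasure γ

instance (γ : ℝ) (r : ℕ) : IsProbabilityMeasure (gpPi γ r) := by
  unfold gpPi; infer_instance

/-- The vector `(Z_{q-j:q-1})_{j=1}^{q}`: the descending order statistics of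
`z_1,…,z_{q-1}` with an extra last entry `Z_{0:q-1} := 0`. -/
def refVec {q : ℕ} (z : Fin (q-1) → ℝ) : Fin q → ℝ := fun j => descStat z (j : ℕ)

/-- `θ = E[K((Z_{q-j:q-1})_{j=1}^{q})]` for iid `GP(γ)` variables `Z_1,…,Z_{q-1}`. -/
def thetaK (γ : ℝ) {q : ℕ} (K : (Fin q → ℝ) → ℝ) : ℝ :=
  ∫ z, K (refVec z) ∂(gpPi γ (q-1))

/-- all moments of `K((Z_{q-j:q-1})_{j=1}^{q})` are finite. -/
def MomentCond (γ : ℝ) {q : ℕ} (K : (Fin q → ℝ) → ℝ) : Prop :=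
  ∀ p : ℝ, 0 < p →
    ∫⁻ z, ENNReal.ofReal (|K (refVec z)| ^ p) ∂(gpPi γ (q-1)) < ⊤

/-- The asymptotic variance
`σ²_K(γ) = ∫_0^∞ (E[K̄_{q+1}((Z_{q-j:q-1})_{j=1}^q, h_γ(S_q/x))])² dx`. -/
def sigmaSqK (γ : ℝ) {q : ℕ} (K : (Fin q → ℝ) → ℝ) : ℝ :=
  ∫ x in Set.Ioi (0:ℝ),
    (∫ zs : (Fin (q-1) → ℝ) × ℝ,
        (Km K (q+1) (Fin.snoc (refVec zs.1) (hGamma γ (zs.2 / x))) - thetaK γ K)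
      ∂((gpPi γ (q-1)).prod (erlangMeasure q))) ^ 2

/-- The U-statistic with kernel `K_m` evaluated on the sample `z`. -/
def UStat {q : ℕ} (K : (Fin q → ℝ) → ℝ) (m n : ℕ) (z : Fin n → ℝ) : ℝ :=
  ((n.choose m : ℝ))⁻¹ *
    ∑ I ∈ Finset.powersetCard m (Finset.univ : Finset (Fin n)),
      Km K I.card fun j => z (I.orderIsoOfFin rfl j).1

/-- Condition on the degree sequence: `m = o(n^{1-ε})` and `log n = o(m^{1-δ})`. -/
def DegreeCond (m : ℕ → ℕ) : Prop :=
  ∃ ε > (0:ℝ), ∃ δ > (0:ℝ),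
    Tendsto (fun n => (m n : ℝ) / (n : ℝ) ^ (1 - ε)) atTop (𝓝 0) ∧
    Tendsto (fun n : ℕ => Real.log n / (m n : ℝ) ^ (1 - δ)) atTop (𝓝 0)

/-- `ζ_{m,ℓ} = cov(K_m(Z_S), K_m(Z_{S'}))` for the blocks `S = [1:m]`,
`S' = [(m-ℓ+1):(2m-ℓ)]` (zero-indexed here), which overlap in `ℓ` indices. -/
def zetaCov {Ω : Type*} [MeasurableSpace Ω] (P : Measure Ω) {q : ℕ}
    (K : (Fin q → ℝ) → ℝ) (Z : ℕ → Ω → ℝ) (m ℓ : ℕ) : ℝ :=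
  (∫ ω, Km K m (fun i : Fin m => Z i ω) * Km K m (fun i : Fin m => Z (m - ℓ + i) ω) ∂P)
    - (∫ ω, Km K m (fun i : Fin m => Z i ω) ∂P)
      * (∫ ω, Km K m (fun i : Fin m => Z (m - ℓ + i) ω) ∂P)

/-- Convergence in distribution to a Gaussian, expressed via pointwise convergence of
the cumulative distribution functions (the Gaussian cdf being continuous). -/
def TendstoGaussian {Ω : Type*} [MeasurableSpace Ω] (P : Measure Ω)
    (T : ℕ → Ω → ℝ) (μ : ℝ) (v : ℝ≥0) : Prop :=
  ∀ x : ℝ, Tendsto (fun n => (P {ω | T n ω ≤ x}).toReal) atTop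
    (𝓝 ((gaussianReal μ v (Set.Iic x)).toReal))

/-- Convergence in probability to the constant `c`. -/
def TendstoInProb {Ω : Type*} [MeasurableSpace Ω] (P : Measure Ω)
    (T : ℕ → Ω → ℝ) (c : ℝ) : Prop :=
  ∀ ε : ℝ, 0 < ε → Tendsto (fun n => (P {ω | ε ≤ |T n ω - c|}).toReal) atTop (𝓝 0)

/-!
Given its `(p + 1)`-st largest value `t`, the `p` largest values of an i.i.d. sample from an
atomless law `μ` are distributed as the order statistics of a sample of size `p` from `μ`
conditioned on `(t, ∞)`: the ordered sample has law `n! • μ^n` restricted to decreasing tuples,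
and a decreasing tuple splits at its `(p + 1)`-st entry. For the standard Pareto law, conditioning
on `(t, ∞)` amounts to multiplication by `t`, so there the top order statistics are `t` times
those of an independent sample with a final entry `1` appended. The increasing map `h_γ` carries
this over to `GP(γ)`, because `h_γ(yz) = h_γ(y) + (1 + γ h_γ(y)) h_γ(z)` and `h_γ(1) = 0`.
-/

/-- The vector of the `k` largest entries of `x`, in descending order, padded with zeros if `x` has
fewer than `k` entries: the top-`k` order statistics `(x_{m:m}, …, x_{m-k+1:m})`. -/
def topStats {m : ℕ} (k : ℕ) (x : Fin m → ℝ) : Fin k → ℝ := fun i => descStat x i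

section DescStat

variable {m : ℕ} {x : Fin m → ℝ} {j : ℕ}

lemma descStat_of_le (hj : m ≤ j) : descStat x j = 0 :=
  dif_neg hj.not_gt

lemma descStat_mem {s : Set ℝ} (hx : ∀ i, x i ∈ s) (hj : j < m) : descStat x j ∈ s := by
  rw [descStat, dif_pos hj]
  exact hx _

lemma descStat_comp_perm (x : Fin m → ℝ) (σ : Equiv.Perm (Fin m)) :
    descStat (x ∘ σ) = descStat x := by
  ext j
  rw [descStat, descStat, Tuple.comp_perm_comp_sort_eq_comp_sort]

lemma descStat_comp_monotoneOn {φ : ℝ → ℝ} {s : Set ℝ} (hφ : MonotoneOn φ s)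
    (hx : ∀ i, x i ∈ s) (hj : j < m) : descStat (φ ∘ x) j = φ (descStat x j) := by
  have hsort : (φ ∘ x) ∘ Tuple.sort x = (φ ∘ x) ∘ Tuple.sort (φ ∘ x) :=
    Tuple.comp_sort_eq_comp_iff_monotone.2
      fun _ _ hij => hφ (hx _) (hx _) (Tuple.monotone_sort x hij)
  rw [descStat, descStat, dif_pos hj, dif_pos hj, ← hsort]
  rfl

lemma topStats_comp_monotoneOn {k : ℕ} {φ : ℝ → ℝ} {s : Set ℝ} (hφ : MonotoneOn φ s)
    (hx : ∀ i, x i ∈ s) (hk : k ≤ m) : topStats k (φ ∘ x) = φ ∘ topStats k x :=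
  funext fun i => descStat_comp_monotoneOn hφ hx (i.isLt.trans_le hk)

lemma snoc_topStats_descStat (p : ℕ) (x : Fin m → ℝ) :
    (Fin.snoc (topStats p x) (descStat x p) : Fin (p + 1) → ℝ) = topStats (p + 1) x := by
  ext i
  cases i using Fin.lastCases with
  | last => rw [Fin.snoc_last, topStats, Fin.val_last]
  | cast i => rw [Fin.snoc_castSucc, topStats, topStats, Fin.val_castSucc]

lemma topStats_eq_self (hx : Antitone x) : topStats m x = x := by
  have hsort : x ∘ Fin.revPerm = x ∘ Tuple.sort x :=
    Tuple.comp_sort_eq_comp_iff_monotone.2 fun i j hij => hx (Fin.rev_le_rev.2 hij)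
  ext i
  rw [topStats, descStat, dif_pos i.isLt, ← hsort, Function.comp_apply, Fin.revPerm_apply]
  congr 1
  ext
  simp only [Fin.val_rev]
  omega

lemma topStats_eq_comp_of_strictAnti {σ : Equiv.Perm (Fin m)} (hσ : StrictAnti (x ∘ σ)) :
    topStats m x = x ∘ σ := by
  ext i
  rw [← topStats_eq_self hσ.antitone, topStats, topStats, descStat_comp_perm]

lemma exists_perm_strictAnti_comp (hx : Function.Injective x) :
    ∃ σ : Equiv.Perm (Fin m), StrictAnti (x ∘ σ) :=
  have hsort : StrictMono (x ∘ Tuple.sort x) :=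
    (Tuple.monotone_sort x).strictMono_of_injective (hx.comp (Tuple.sort x).injective)
  ⟨Fin.revPerm.trans (Tuple.sort x), fun _ _ hij => hsort (Fin.rev_lt_rev.2 hij)⟩

lemma perm_eq_of_strictAnti_comp {σ τ : Equiv.Perm (Fin m)} (hσ : StrictAnti (x ∘ σ))
    (hτ : StrictAnti (x ∘ τ)) : σ = τ := by
  have hx : Function.Injective x := (σ.injective_comp x).1 hσ.injective
  ext i
  rw [hx (congrFun (Tuple.unique_antitone hσ.antitone hτ.antitone) i)]

lemma measurableSet_eq_sort (σ : Equiv.Perm (Fin m)) :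
    MeasurableSet {x : Fin m → ℝ | σ = Tuple.sort x} := by
  simp only [Tuple.eq_sort_iff, Monotone, Function.comp_apply]
  measurability

lemma measurableSet_strictAnti : MeasurableSet {x : Fin m → ℝ | StrictAnti x} := by
  simp only [StrictAnti]
  measurability

@[fun_prop]
lemma measurable_descStat (j : ℕ) : Measurable fun x : Fin m → ℝ => descStat x j := by
  by_cases hj : j < m
  · have hsum : (fun x : Fin m → ℝ => descStat x j) = fun x => ∑ σ : Equiv.Perm (Fin m),
        if σ = Tuple.sort x then x (σ ⟨m - 1 - j, by omega⟩) else 0 := by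
      ext x
      simp [descStat, hj]
    rw [hsum]
    exact Finset.measurable_sum _ fun σ _ =>
      Measurable.ite (measurableSet_eq_sort σ) (measurable_pi_apply _) measurable_const
  · simp only [descStat_of_le (not_lt.1 hj), measurable_const]

@[fun_prop]
lemma measurable_topStats (k : ℕ) : Measurable (topStats k : (Fin m → ℝ) → Fin k → ℝ) :=
  measurable_pi_lambda _ fun i => measurable_descStat i

end DescStat

section ProductMeasure

@[fun_prop]
lemma measurable_finSnoc {α β : Type*} [MeasurableSpace α] [MeasurableSpace β] {n : ℕ}
    {f : β → Fin n → α} {g : β → α} (hf : Measurable f) (hg : Measurable g) :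
    Measurable fun b => (Fin.snoc (f b) (g b) : Fin (n + 1) → α) := by
  refine measurable_pi_lambda _ fun i => ?_
  cases i using Fin.lastCases with
  | last => simpa only [Fin.snoc_last] using hg
  | cast i => simpa only [Fin.snoc_castSucc] using hf.eval

lemma measurePreserving_pi_comp_perm {ι α : Type*} [Fintype ι] [MeasurableSpace α] (μ : Measure α)
    [SigmaFinite μ] (σ : Equiv.Perm ι) :
    MeasurePreserving (fun x : ι → α => x ∘ σ) (Measure.pi fun _ => μ) (Measure.pi fun _ => μ) := by
  simpa using! measurePreserving_arrowCongr' (fun _ : ι => μ) (fun _ : ι => μ) σ.symm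
    (.refl α) fun _ => .id μ

lemma measurePreserving_finAppend {α : Type*} [MeasurableSpace α] (μ : Measure α) [SigmaFinite μ]
    (a b : ℕ) :
    MeasurePreserving (fun z : (Fin a → α) × (Fin b → α) => Fin.append z.1 z.2)
      ((Measure.pi fun _ => μ).prod (Measure.pi fun _ => μ)) (Measure.pi fun _ => μ) := by
  convert! (measurePreserving_piCongrLeft (fun _ => μ) finSumFinEquiv).comp
    (measurePreserving_sumPiEquivProdPi_symm (X := fun _ : Fin a ⊕ Fin b => α) fun _ => μ)
    using 1
  ext z i
  obtain ⟨i, rfl⟩ := finSumFinEquiv.surjective i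
  rw [Function.comp_apply, MeasurableEquiv.coe_piCongrLeft, Equiv.piCongrLeft_apply_apply]
  cases i with
  | inl i => rw [finSumFinEquiv_apply_left, Fin.append_left]; rfl
  | inr i => rw [finSumFinEquiv_apply_right, Fin.append_right]; rfl

lemma map_sumInl_sumInr_eq_prod {Ω ι κ α : Type*} [MeasurableSpace Ω] [Fintype ι] [Fintype κ]
    [MeasurableSpace α] {P : Measure Ω} {X : ι ⊕ κ → Ω → α}
    (hX : ∀ i, Measurable (X i)) (hIndep : iIndepFun X P) :
    P.map (fun ω => (fun i => X (Sum.inl i) ω, fun k => X (Sum.inr k) ω)) =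
      (Measure.pi fun i => P.map (X (Sum.inl i))).prod
        (Measure.pi fun k => P.map (X (Sum.inr k))) := by
  have := hIndep.isProbabilityMeasure
  have : ∀ i, IsProbabilityMeasure (P.map (X i)) := fun i =>
    Measure.isProbabilityMeasure_map (hX i).aemeasurable
  have hlaw := (iIndepFun_iff_map_fun_eq_pi_map fun i => (hX i).aemeasurable).1 hIndep
  have hsplit := measurePreserving_sumPiEquivProdPi (X := fun _ : ι ⊕ κ => α) fun i => P.map (X i)
  rw [← hsplit.map_eq, ← hlaw, Measure.map_map hsplit.measurable (measurable_pi_lambda _ hX)]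
  rfl

lemma ae_pi_forall {ι : Type*} [Fintype ι] {α : ι → Type*} [∀ i, MeasurableSpace (α i)]
    {μ : ∀ i, Measure (α i)} [∀ i, SigmaFinite (μ i)] {p : ∀ i, α i → Prop}
    (hp : ∀ i, ∀ᵐ a ∂μ i, p i a) : ∀ᵐ x ∂Measure.pi μ, ∀ i, p i (x i) :=
  ae_all_iff.2 fun i => Measure.tendsto_eval_ae_ae.eventually (hp i)

lemma ae_pi_injective {α : Type*} [MeasurableSpace α] [MeasurableEq α] {μ : Measure α}
    [SigmaFinite μ] [NullSingletonClass μ] (n : ℕ) :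
    ∀ᵐ x ∂Measure.pi fun _ : Fin n => μ, Function.Injective x := by
  suffices hne : ∀ᵐ x ∂Measure.pi fun _ : Fin n => μ, ∀ i j, i ≠ j → x i ≠ x j by
    filter_upwards [hne] with x hx i j
    exact not_imp_not.1 (hx i j)
  simp only [ae_all_iff]
  intro i j hij
  cases n with
  | zero => exact i.elim0
  | succ n =>
    obtain ⟨k, rfl⟩ := Fin.exists_succAbove_eq hij
    have hdiag : ∀ᵐ z ∂μ.prod (Measure.pi fun _ : Fin n => μ), z.2 k ≠ z.1 := by
      have hset : MeasurableSet {z : α × (Fin n → α) | z.2 k ≠ z.1} :=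
        (measurableSet_eq_fun (by fun_prop) measurable_fst).compl
      rw [Measure.ae_prod_iff_ae_ae hset]
      exact .of_forall fun t => Measure.ae_eval_ne (fun _ : Fin n => μ) k t
    exact (measurePreserving_piFinSuccAbove (fun _ => μ) j).quasiMeasurePreserving.ae hdiag

lemma pi_cond {ι : Type*} [Fintype ι] {α : ι → Type*} [∀ i, MeasurableSpace (α i)]
    (μ : ∀ i, Measure (α i)) [∀ i, SigmaFinite (μ i)] (s : ∀ i, Set (α i)) :
    Measure.pi (fun i => (μ i)[|s i]) =
      (∏ i, (μ i (s i))⁻¹) • (Measure.pi μ).restrict (univ.pi s) := by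
  refine Measure.pi_eq fun A _ => ?_
  simp only [Measure.restrict_pi_pi, Measure.smul_apply, Measure.pi_pi, smul_eq_mul,
    ← Finset.prod_mul_distrib, ProbabilityTheory.cond]

lemma pi_restrict_eq_smul_pi_cond {ι : Type*} [Fintype ι] {α : ι → Type*}
    [∀ i, MeasurableSpace (α i)] (μ : ∀ i, Measure (α i)) [∀ i, IsFiniteMeasure (μ i)]
    {s : ∀ i, Set (α i)} (hs : ∀ i, MeasurableSet (s i)) :
    Measure.pi (fun i => (μ i).restrict (s i)) =
      (∏ i, μ i (s i)) • Measure.pi fun i => (μ i)[|s i] := by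
  refine Measure.pi_eq fun A hA => ?_
  simp only [Measure.smul_apply, Measure.pi_pi, smul_eq_mul, ← Finset.prod_mul_distrib]
  refine Finset.prod_congr rfl fun i _ => ?_
  rw [mul_comm, cond_mul_eq_inter (hs i), Measure.restrict_apply (hA i), inter_comm]

end ProductMeasure

section OrderStatistics

variable {μ : Measure ℝ} [NullSingletonClass μ]

/- Almost surely exactly one of the `n!` reorderings of the sample is decreasing, and by
exchangeability all of them have the same law. -/
theorem map_topStats_pi [SigmaFinite μ] (n : ℕ) :
    (Measure.pi fun _ : Fin n => μ).map (topStats n) =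
      (n.factorial : ℝ≥0∞) • (Measure.pi fun _ => μ).restrict {x | StrictAnti x} := by
  ext s hs
  have hA : MeasurableSet (s ∩ {x : Fin n → ℝ | StrictAnti x}) := hs.inter measurableSet_strictAnti
  let reorder (σ : Equiv.Perm (Fin n)) (x : Fin n → ℝ) : Fin n → ℝ := x ∘ σ
  have hreorder (σ) := measurePreserving_pi_comp_perm μ (ι := Fin n) σ
  have hdisj : Pairwise (Function.onFun Disjoint fun σ => reorder σ ⁻¹' (s ∩ {x | StrictAnti x})) :=
    fun σ τ hστ => disjoint_left.2 fun x hσ hτ => hστ (perm_eq_of_strictAnti_comp hσ.2 hτ.2)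
  have hunion : topStats n ⁻¹' s =ᵐ[Measure.pi fun _ : Fin n => μ]
      ⋃ σ, reorder σ ⁻¹' (s ∩ {x | StrictAnti x}) := by
    refine eventuallyEq_set.2 ?_
    filter_upwards [ae_pi_injective n] with x hx
    refine ⟨fun hxs => ?_, fun hxs => ?_⟩
    · obtain ⟨σ, hσ⟩ := exists_perm_strictAnti_comp hx
      rw [mem_preimage, topStats_eq_comp_of_strictAnti hσ] at hxs
      exact mem_iUnion.2 ⟨σ, hxs, hσ⟩
    · obtain ⟨σ, hσs, hσ⟩ := mem_iUnion.1 hxs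
      rwa [mem_preimage, topStats_eq_comp_of_strictAnti hσ]
  rw [Measure.map_apply (measurable_topStats n) hs, measure_congr hunion,
    measure_iUnion hdisj fun σ => (hreorder σ).measurable hA, tsum_fintype]
  simp only [reorder, (hreorder _).measure_preimage hA.nullMeasurableSet, Finset.sum_const,
    Finset.card_univ, Fintype.card_perm, Fintype.card_fin, nsmul_eq_mul, Measure.smul_apply,
    smul_eq_mul, Measure.restrict_apply hs]

lemma lintegral_topStats [SigmaFinite μ] {n : ℕ} {f : (Fin n → ℝ) → ℝ≥0∞} (hf : Measurable f) :
    ∫⁻ x, f (topStats n x) ∂(Measure.pi fun _ : Fin n => μ) =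
      n.factorial * ∫⁻ x in {x | StrictAnti x}, f x ∂(Measure.pi fun _ => μ) := by
  rw [← lintegral_map hf (measurable_topStats n), map_topStats_pi, lintegral_smul_measure,
    smul_eq_mul]

lemma strictAnti_append_iff {a b : ℕ} {u : Fin a → ℝ} {w : Fin (b + 1) → ℝ} :
    StrictAnti (Fin.append u w) ↔ StrictAnti u ∧ (∀ i, w 0 < u i) ∧ StrictAnti w := by
  refine ⟨fun h => ⟨fun i j hij => ?_, fun i => ?_, fun i j hij => ?_⟩, ?_⟩
  · simpa using h ((Fin.strictMono_castAdd (b + 1)) hij)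
  · simpa using h (show Fin.castAdd (b + 1) i < Fin.natAdd a 0 by simp [Fin.lt_def])
  · simpa using h ((Fin.strictMono_natAdd a) hij)
  · rintro ⟨hu, h0, hw⟩ i j hij
    induction i using Fin.addCases <;> induction j using Fin.addCases <;>
      simp only [Fin.append_left, Fin.append_right]
    case left.left => exact hu hij
    case left.right j => exact (hw.antitone (Fin.zero_le j)).trans_lt (h0 _)
    case right.left => simp only [Fin.lt_def, Fin.val_natAdd, Fin.val_castAdd] at hij; omega
    case right.right => exact hw (by simpa using hij)

lemma setLIntegral_strictAnti_append {ν : Measure ℝ} [SigmaFinite ν] {a b : ℕ}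
    {f : (Fin (a + (b + 1)) → ℝ) → ℝ≥0∞} (hf : Measurable f) :
    ∫⁻ x in {x | StrictAnti x}, f x ∂(Measure.pi fun _ => ν) =
      ∫⁻ w in {w : Fin (b + 1) → ℝ | StrictAnti w},
        ∫⁻ u in {u : Fin a → ℝ | StrictAnti u}, f (Fin.append u w)
          ∂(Measure.pi fun _ => ν.restrict (Ioi (w 0))) ∂(Measure.pi fun _ => ν) := by
  have happend := measurePreserving_finAppend ν a (b + 1)
  have hF : Measurable ({x : Fin (a + (b + 1)) → ℝ | StrictAnti x}.indicator f) :=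
    hf.indicator measurableSet_strictAnti
  rw [← lintegral_indicator measurableSet_strictAnti,
    ← lintegral_indicator measurableSet_strictAnti]
  refine (happend.lintegral_comp hF).symm.trans <|
    (lintegral_prod_symm _ (hF.comp happend.measurable).aemeasurable).trans ?_
  refine lintegral_congr fun w => ?_
  by_cases hw : StrictAnti w
  · rw [indicator_of_mem (show w ∈ {w | StrictAnti w} from hw),
      ← Measure.restrict_pi_pi (fun _ : Fin a => ν), Measure.restrict_restrict
        measurableSet_strictAnti, ← lintegral_indicator
        (measurableSet_strictAnti.inter (.univ_pi fun _ => measurableSet_Ioi))]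
    refine lintegral_congr fun u => ?_
    simp [indicator, strictAnti_append_iff, hw]
  · simp [indicator, strictAnti_append_iff, hw]

lemma setLIntegral_strictAnti_pi_restrict [IsFiniteMeasure μ] {n : ℕ}
    {f : (Fin n → ℝ) → ℝ≥0∞} (hf : Measurable f) {s : Set ℝ} (hs : MeasurableSet s) :
    ∫⁻ u in {u | StrictAnti u}, f u ∂(Measure.pi fun _ => μ.restrict s) =
      ∫⁻ _u in {u : Fin n → ℝ | StrictAnti u},
        (∫⁻ v, f (topStats n v) ∂(Measure.pi fun _ : Fin n => μ[|s]))
          ∂(Measure.pi fun _ => μ.restrict s) := by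
  have hn : (n.factorial : ℝ≥0∞) ≠ 0 := by exact_mod_cast n.factorial_ne_zero
  refine (ENNReal.mul_right_inj hn (ENNReal.natCast_ne_top _)).1 ?_
  rw [← lintegral_topStats hf, ← lintegral_topStats measurable_const, lintegral_const,
    Measure.pi_univ, pi_restrict_eq_smul_pi_cond _ fun _ => hs, lintegral_smul_measure]
  simp only [Measure.restrict_apply_univ, smul_eq_mul, mul_comm]

lemma measurable_lintegral_pi_cond_Ioi {ν : Measure ℝ} [SigmaFinite ν] {n : ℕ}
    {f : (Fin n → ℝ) × ℝ → ℝ≥0∞} (hf : Measurable f) :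
    Measurable fun t => ∫⁻ u, f (u, t) ∂(Measure.pi fun _ => ν[|Ioi t]) := by
  have hvol : Measurable fun t => ν (Ioi t) :=
    Antitone.measurable fun _ _ hst => measure_mono (Ioi_subset_Ioi hst)
  have hset : MeasurableSet {z : ℝ × (Fin n → ℝ) | z.2 ∈ univ.pi fun _ => Ioi z.1} := by
    simp only [mem_univ_pi, mem_Ioi]
    measurability
  simp only [pi_cond, lintegral_smul_measure, smul_eq_mul,
    ← lintegral_indicator (MeasurableSet.univ_pi fun _ => measurableSet_Ioi)]
  refine (Finset.measurable_prod _ fun _ _ => hvol.inv).mul ?_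
  exact ((hf.comp measurable_swap).indicator hset).lintegral_prod_right'

theorem lintegral_topStats_descStat [IsFiniteMeasure μ] {p m : ℕ} (hp : p < m)
    {f : (Fin p → ℝ) × ℝ → ℝ≥0∞} (hf : Measurable f) :
    ∫⁻ x, f (topStats p x, descStat x p) ∂(Measure.pi fun _ : Fin m => μ) =
      ∫⁻ x, ∫⁻ v, f (topStats p v, descStat x p)
        ∂(Measure.pi fun _ : Fin p => μ[|Ioi (descStat x p)]) ∂(Measure.pi fun _ : Fin m => μ) := by
  obtain ⟨r, rfl⟩ : ∃ r, m = p + (r + 1) := ⟨m - (p + 1), by omega⟩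
  set g : ℝ → ℝ≥0∞ := fun t => ∫⁻ v, f (topStats p v, t) ∂(Measure.pi fun _ : Fin p => μ[|Ioi t])
    with hg
  have hgm : Measurable g :=
    measurable_lintegral_pi_cond_Ioi (f := fun z => f (topStats p z.1, z.2)) (by fun_prop)
  let pivot : Fin (p + (r + 1)) := Fin.natAdd p 0
  calc
    ∫⁻ x, f (topStats p x, descStat x p) ∂(Measure.pi fun _ => μ)
    _ = (p + (r + 1)).factorial * ∫⁻ x in {x : Fin (p + (r + 1)) → ℝ | StrictAnti x},
          f (x ∘ Fin.castAdd (r + 1), x pivot) ∂(Measure.pi fun _ => μ) :=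
      lintegral_topStats
        (f := fun x : Fin (p + (r + 1)) → ℝ => f (x ∘ Fin.castAdd (r + 1), x pivot)) (by fun_prop)
    _ = (p + (r + 1)).factorial * ∫⁻ x in {x : Fin (p + (r + 1)) → ℝ | StrictAnti x},
          g (x pivot) ∂(Measure.pi fun _ => μ) := by
      congr 1
      refine (setLIntegral_strictAnti_append (by fun_prop)).trans <|
        .trans ?_ (setLIntegral_strictAnti_append (by fun_prop)).symm
      refine lintegral_congr fun w => ?_
      simpa [Function.comp_def, pivot, hg] using setLIntegral_strictAnti_pi_restrict (μ := μ)
        (f := fun u : Fin p → ℝ => f (u, w 0)) (by fun_prop) (measurableSet_Ioi (a := w 0))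
    _ = ∫⁻ x, g (descStat x p) ∂(Measure.pi fun _ : Fin (p + (r + 1)) => μ) :=
      (lintegral_topStats (f := fun x => g (x pivot)) (by fun_prop)).symm

end OrderStatistics

section Pareto

lemma cond_eq_of_eq_smul_restrict {Ω : Type*} [MeasurableSpace Ω] {μ ν : Measure Ω}
    [IsProbabilityMeasure ν] {c : ℝ≥0∞} {s : Set Ω} (h : ν = c • μ.restrict s) : μ[|s] = ν := by
  have hc : c * μ s = 1 := by
    simpa [h] using measure_univ (μ := ν)
  rw [h, ENNReal.eq_inv_of_mul_eq_one_left hc, ProbabilityTheory.cond]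

variable {t r : ℝ}

instance (t r : ℝ) : NullSingletonClass (paretoMeasure t r) := by
  unfold paretoMeasure; infer_instance

lemma ae_le_paretoMeasure (t r : ℝ) : ∀ᵐ x ∂paretoMeasure t r, t ≤ x := by
  simp only [ae_iff, not_le]
  exact (withDensity_apply _ measurableSet_Iio).trans (lintegral_paretoPDF_of_le le_rfl)

lemma paretoMeasure_cond_Ioi {y : ℝ} (ht : 0 < t) (hr : 0 < r) (hty : t ≤ y) :
    (paretoMeasure t r)[|Ioi y] = paretoMeasure y r := by
  have hy : 0 < y := ht.trans_le hty
  have := isProbabilityMeasure_paretoMeasure hy hr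
  refine cond_eq_of_eq_smul_restrict (c := ENNReal.ofReal ((y / t) ^ r)) ?_
  rw [paretoMeasure, paretoMeasure, restrict_withDensity measurableSet_Ioi,
    ← withDensity_indicator measurableSet_Ioi, ← withDensity_smul' _ _ ENNReal.ofReal_ne_top]
  refine withDensity_congr_ae ?_
  filter_upwards [Measure.ae_ne volume y] with x hxy
  rcases hxy.lt_or_gt with hxy | hxy
  · simp [paretoPDF_of_lt hxy, hxy.le]
  · rw [Pi.smul_apply, indicator_of_mem (mem_Ioi.2 hxy), paretoPDF_of_le hxy.le,
      paretoPDF_of_le (hty.trans hxy.le), smul_eq_mul, ← ENNReal.ofReal_mul (by positivity),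
      div_rpow hy.le ht.le]
    congr 1
    have := rpow_pos_of_pos ht r
    field_simp

lemma paretoPDF_mul_left {c : ℝ} (hc : 0 < c) (ht : 0 < t) (r x : ℝ) :
    ENNReal.ofReal c * paretoPDF (c * t) r (c * x) = paretoPDF t r x := by
  rcases lt_or_ge x t with hx | hx
  · rw [paretoPDF_of_lt hx, paretoPDF_of_lt (mul_lt_mul_of_pos_left hx hc), mul_zero]
  · rw [paretoPDF_of_le hx, paretoPDF_of_le (mul_le_mul_of_nonneg_left hx hc.le),
      ← ENNReal.ofReal_mul hc.le, mul_rpow hc.le ht.le, mul_rpow hc.le (ht.trans_le hx).le,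
      show -(r + 1) = -r - 1 by ring, rpow_sub_one hc.ne', rpow_neg hc.le]
    congr 1
    have := rpow_pos_of_pos hc r
    field_simp

lemma map_mul_left_paretoMeasure {c : ℝ} (hc : 0 < c) (ht : 0 < t) (r : ℝ) :
    (paretoMeasure t r).map (c * ·) = paretoMeasure (c * t) r := by
  have hmul : Measurable (c * · : ℝ → ℝ) := measurable_const_mul c
  have hpdf : Measurable (paretoPDF (c * t) r) := (measurable_paretoPDFReal _ _).ennreal_ofReal
  ext s hs
  rw [Measure.map_apply hmul hs, paretoMeasure, paretoMeasure, withDensity_apply _ (hmul hs),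
    withDensity_apply _ hs]
  nth_rw 2 [← smul_map_volume_mul_left hc.ne']
  rw [Measure.restrict_smul, lintegral_smul_measure, setLIntegral_map hs hpdf hmul, smul_eq_mul,
    ← lintegral_const_mul _ (by fun_prop), abs_of_pos hc]
  simp only [paretoPDF_mul_left hc ht]

lemma lintegral_topStats_pi_paretoMeasure_cond {y : ℝ} (ht : 0 < t) (hr : 0 < r) (hty : t ≤ y)
    {p : ℕ} {f : (Fin (p + 1) → ℝ) → ℝ≥0∞} (hf : Measurable f) :
    ∫⁻ v, f (Fin.snoc (topStats p v) y)
        ∂(Measure.pi fun _ : Fin p => (paretoMeasure t r)[|Ioi y]) =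
      ∫⁻ v, f ((y * ·) ∘ Fin.snoc (topStats p v) 1)
        ∂(Measure.pi fun _ : Fin p => paretoMeasure 1 r) := by
  have hy : 0 < y := ht.trans_le hty
  have := isProbabilityMeasure_paretoMeasure one_pos hr
  have hscale : Measure.pi (fun _ : Fin p => (paretoMeasure t r)[|Ioi y]) =
      (Measure.pi fun _ : Fin p => paretoMeasure 1 r).map fun v => (y * ·) ∘ v := by
    refine .trans ?_ (Measure.pi_map_pi fun _ => (measurable_const_mul y).aemeasurable).symm
    simp only [paretoMeasure_cond_Ioi ht hr hty, map_mul_left_paretoMeasure hy one_pos, mul_one]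
  rw [hscale, lintegral_map (by fun_prop) (by fun_prop)]
  refine lintegral_congr fun v => congrArg f ?_
  rw [topStats_comp_monotoneOn ((monotone_mul_left_of_nonneg hy.le).monotoneOn univ)
    (fun _ => mem_univ _) le_rfl, Fin.comp_snoc, mul_one]

theorem map_topStats_pi_paretoMeasure {p m : ℕ} (ht : 0 < t) (hr : 0 < r) (hp : p < m) :
    (Measure.pi fun _ : Fin m => paretoMeasure t r).map (topStats (p + 1)) =
      ((Measure.pi fun _ : Fin m => paretoMeasure t r).prod
        (Measure.pi fun _ : Fin p => paretoMeasure 1 r)).map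
          fun z => (descStat z.1 p * ·) ∘ Fin.snoc (topStats p z.2) 1 := by
  have := isProbabilityMeasure_paretoMeasure ht hr
  have := isProbabilityMeasure_paretoMeasure one_pos hr
  have hge : ∀ᵐ x ∂(Measure.pi fun _ : Fin m => paretoMeasure t r), t ≤ descStat x p := by
    filter_upwards [ae_pi_forall fun _ : Fin m => ae_le_paretoMeasure t r] with x hx
    exact descStat_mem hx hp
  refine Measure.ext_of_lintegral _ fun f hf => ?_
  rw [lintegral_map hf (by fun_prop), lintegral_map hf (by fun_prop),
    lintegral_prod _ (by fun_prop)]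
  simp only [← snoc_topStats_descStat]
  rw [lintegral_topStats_descStat hp (f := fun z => f (Fin.snoc z.1 z.2)) (by fun_prop)]
  refine lintegral_congr_ae ?_
  filter_upwards [hge] with x hx
  exact lintegral_topStats_pi_paretoMeasure_cond ht hr hx hf

end Pareto

section GeneralizedPareto

lemma hGamma_one (γ : ℝ) : hGamma γ 1 = 0 := by simp [hGamma]

lemma hGamma_mul (γ : ℝ) {y z : ℝ} (hy : 0 < y) (hz : 0 < z) :
    hGamma γ (y * z) = hGamma γ y + (1 + γ * hGamma γ y) * hGamma γ z := by
  unfold hGamma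
  split_ifs with hγ
  · simp [hγ, log_mul hy.ne' hz.ne']
  · rw [mul_rpow hy.le hz.le]
    field_simp
    ring

lemma strictMonoOn_hGamma (γ : ℝ) : StrictMonoOn (hGamma γ) (Ioi 0) := by
  intro x (hx : 0 < x) y _ hxy
  unfold hGamma
  split_ifs with hγ
  · exact log_lt_log hx hxy
  · rcases lt_or_gt_of_ne hγ with hγ | hγ
    · exact (div_lt_div_right_of_neg hγ).2 (sub_lt_sub_right (rpow_lt_rpow_of_neg hx hxy hγ) 1)
    · exact div_lt_div_of_pos_right (sub_lt_sub_right (rpow_lt_rpow hx.le hxy hγ) 1) hγ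

lemma hGamma_comp_mul_snoc_topStats {γ : ℝ} {p m : ℕ} {x : Fin m → ℝ} {y : Fin p → ℝ}
    (hx : ∀ i, 0 < x i) (hy : ∀ i, 0 < y i) (hp : p < m) :
    hGamma γ ∘ (descStat x p * ·) ∘ Fin.snoc (topStats p y) 1 = fun i : Fin (p + 1) =>
      descStat (hGamma γ ∘ x) p +
        (1 + γ * descStat (hGamma γ ∘ x) p) * topStats (p + 1) (hGamma γ ∘ y) i := by
  have hmono := (strictMonoOn_hGamma γ).monotoneOn
  have hpos : ∀ i, 0 < (Fin.snoc (topStats p y) 1 : Fin (p + 1) → ℝ) i :=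
    Fin.forall_fin_succ'.2
      ⟨fun i => by rw [Fin.snoc_castSucc]; exact descStat_mem (s := Ioi 0) hy i.isLt,
        by rw [Fin.snoc_last]; exact one_pos⟩
  have hsnoc : topStats (p + 1) (hGamma γ ∘ y) = hGamma γ ∘ Fin.snoc (topStats p y) 1 := by
    rw [← snoc_topStats_descStat, descStat_of_le le_rfl, topStats_comp_monotoneOn hmono hy le_rfl,
      Fin.comp_snoc, hGamma_one]
  ext i
  rw [hsnoc, descStat_comp_monotoneOn hmono hx hp]
  exact hGamma_mul γ (descStat_mem (s := Ioi 0) hx hp) (hpos i)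

lemma gpPi_eq_map (γ : ℝ) (n : ℕ) :
    gpPi γ n = (Measure.pi fun _ : Fin n => pareto1).map fun y => hGamma γ ∘ y :=
  (Measure.pi_map_pi fun _ => (measurable_hGamma γ).aemeasurable).symm

lemma ae_pi_pareto1_pos (n : ℕ) : ∀ᵐ y ∂(Measure.pi fun _ : Fin n => pareto1), ∀ i, 0 < y i :=
  ae_pi_forall fun _ => (ae_le_paretoMeasure 1 1).mono fun _ => one_pos.trans_le

lemma map_topStats_gpPi_eq_map_hGamma (γ : ℝ) {k m : ℕ} (hk : k ≤ m) :
    (gpPi γ m).map (topStats k) =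
      ((Measure.pi fun _ : Fin m => pareto1).map (topStats k)).map (hGamma γ ∘ ·) := by
  have hγ := measurable_hGamma γ
  rw [gpPi_eq_map, Measure.map_map (by fun_prop) (by fun_prop),
    Measure.map_map (by fun_prop) (by fun_prop)]
  refine Measure.map_congr ?_
  filter_upwards [ae_pi_pareto1_pos m] with y hy
  exact topStats_comp_monotoneOn (strictMonoOn_hGamma γ).monotoneOn hy hk

theorem map_topStats_gpPi (γ : ℝ) {p m : ℕ} (hp : p < m) :
    (gpPi γ m).map (topStats (p + 1)) =
      ((gpPi γ m).prod (gpPi γ p)).map fun z i =>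
        descStat z.1 p + (1 + γ * descStat z.1 p) * topStats (p + 1) z.2 i := by
  have hγ := measurable_hGamma γ
  rw [map_topStats_gpPi_eq_map_hGamma γ hp, pareto1,
    map_topStats_pi_paretoMeasure one_pos one_pos hp, ← pareto1,
    Measure.map_map (by fun_prop) (by fun_prop), gpPi_eq_map, gpPi_eq_map,
    Measure.map_prod_map _ _ (by fun_prop) (by fun_prop),
    Measure.map_map (by fun_prop) (by fun_prop)]
  refine Measure.map_congr ?_
  filter_upwards [Measure.quasiMeasurePreserving_fst.ae (ae_pi_pareto1_pos m),
    Measure.quasiMeasurePreserving_snd.ae (ae_pi_pareto1_pos p)] with z hz₁ hz₂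
  exact hGamma_comp_mul_snoc_topStats hz₁ hz₂ hp

end GeneralizedPareto

/-- Lemma: representation of the top-`q` order statistics of a GP sample.
For `1 ≤ q ≤ m` and independent standard `GP(γ)` random variables
`Z*_1,…,Z*_m, Z_1,…,Z_{q-1}` (all mutually independent),
`((Z*_{m-i+1:m})_{i=1}^q) =_d ((Z*_{m-q+1:m} + (1 + γ Z*_{m-q+1:m}) Z_{q-i:q-1})_{i=1}^q)`
with `Z_{0:q-1} := 0`. -/
theorem gp_top_order_statistics_representation
    {Ω : Type*} [MeasurableSpace Ω] (P : Measure Ω) [IsProbabilityMeasure P]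
    (γ : ℝ) (q m : ℕ) (hq : 1 ≤ q) (hqm : q ≤ m)
    (W : (Fin m ⊕ Fin (q - 1)) → Ω → ℝ)
    (hWmeas : ∀ i, Measurable (W i))
    (hIndep : iIndepFun W P)
    (hDist : ∀ i, Measure.map (W i) P = gpMeasure γ) :
    Measure.map
      (fun ω (i : Fin q) => descStat (fun a : Fin m => W (Sum.inl a) ω) (i : ℕ)) P
    = Measure.map
      (fun ω (i : Fin q) =>
        descStat (fun a : Fin m => W (Sum.inl a) ω) (q - 1) +
          (1 + γ * descStat (fun a : Fin m => W (Sum.inl a) ω) (q - 1)) *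
            descStat (fun a : Fin (q - 1) => W (Sum.inr a) ω) (i : ℕ)) P := by
  obtain ⟨p, rfl⟩ : ∃ p, q = p + 1 := ⟨q - 1, by omega⟩
  change Fin m ⊕ Fin p → Ω → ℝ at W
  let Z ω : (Fin m → ℝ) × (Fin p → ℝ) := (fun i => W (Sum.inl i) ω, fun k => W (Sum.inr k) ω)
  have hZ : Measurable Z := by fun_prop
  have hlaw : P.map Z = (gpPi γ m).prod (gpPi γ p) := by
    simpa only [hDist] using! map_sumInl_sumInr_eq_prod hWmeas hIndep
  calc
    P.map (fun ω => topStats (p + 1) (Z ω).1)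
    _ = ((P.map Z).map Prod.fst).map (topStats (p + 1)) := by
      rw [Measure.map_map measurable_fst hZ, Measure.map_map (by fun_prop) (by fun_prop)]
      rfl
    _ = (P.map Z).map fun z i =>
          descStat z.1 p + (1 + γ * descStat z.1 p) * topStats (p + 1) z.2 i := by
      rw [hlaw, Measure.map_fst_prod, measure_univ, one_smul, map_topStats_gpPi γ hqm]
    _ = _ := Measure.map_map (by fun_prop) hZ

end
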